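/- arXiv:2112.15183 — 2 statements merged into one kernel-verified Lean document; each statement's English description precedes it below -/
import Mathlib

section
/- Let θ ∈ [0,π]. The entanglement witness W_I(θ) − 2P is optimal: for every positive semidefinite 16×16 matrix D with D ≠ 0 and every ε > 0, the matrix W_I(θ) − 2P − ε·D is not block positive (i.e. there exist x,y : Fin 4 → ℂ with Re⟨x⊗y, (W_I(θ) − 2P − εD)(x⊗y)⟩ < 0). -/
open Matrix Complex Real

/-- The tensor (product) vector `x ⊗ y` in `ℂ¹⁶`. -/
noncomputable def tensorVec (x y : Fin 4 → ℂ) : Fin 4 × Fin 4 → ℂ :=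
  fun p => x p.1 * y p.2

/-- The expectation `⟨v, W v⟩ = ∑ i, conj (v i) * (W *ᵥ v) i`. -/
noncomputable def expec (W : Matrix (Fin 4 × Fin 4) (Fin 4 × Fin 4) ℂ)
    (v : Fin 4 × Fin 4 → ℂ) : ℂ :=
  ∑ i, star (v i) * W.mulVec v i

/-- The Bell-diagonal matrix `W[a,b,c,d]` with `(α₀,α₁,α₂,α₃) = (a,b,c,d)`:
`W((k,m),(k',m')) = α_{(m−k) mod 4}` if `k=k', m=m'`; `−1` if `k=m, k'=m', k≠k'`;
`0` otherwise. -/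
noncomputable def Wabcd (a b c d : ℝ) : Matrix (Fin 4 × Fin 4) (Fin 4 × Fin 4) ℂ :=
  fun p q =>
    if p.1 = q.1 ∧ p.2 = q.2 then ((![a, b, c, d] (p.2 - p.1) : ℝ) : ℂ)
    else if p.1 = p.2 ∧ q.1 = q.2 ∧ p.1 ≠ q.1 then -1
    else 0

/-- The class-I witness `W_I(θ)`. -/
noncomputable def WI (θ : ℝ) : Matrix (Fin 4 × Fin 4) (Fin 4 × Fin 4) ℂ :=
  Wabcd ((2 - Real.sin θ) / 2) ((1 + Real.cos θ) / 2)
        (2 - (2 - Real.sin θ) / 2) (1 - (1 + Real.cos θ) / 2)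

/-- The class-II witness `W_II(θ)`. -/
noncomputable def WII (θ : ℝ) : Matrix (Fin 4 × Fin 4) (Fin 4 × Fin 4) ℂ :=
  Wabcd ((1 + Real.cos θ) / 2) ((2 - Real.sin θ) / 2)
        (1 - (1 + Real.cos θ) / 2) (2 - (2 - Real.sin θ) / 2)

/-- The maximally entangled vector `Ψ(j,j') = (−1)^{j+1}/2` if `j = j'`, else `0`. -/
noncomputable def PsiVec : Fin 4 × Fin 4 → ℂ :=
  fun p => if p.1 = p.2 then ((-1 : ℂ) ^ ((p.1 : ℕ) + 1)) / 2 else 0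

/-- The rank-one projector `P = |Ψ⟩⟨Ψ|`. -/
noncomputable def Pmat : Matrix (Fin 4 × Fin 4) (Fin 4 × Fin 4) ℂ :=
  fun u v => PsiVec u * star (PsiVec v)

open scoped ComplexOrder


lemma expec_formula (θ : ℝ) (x y : Fin 4 → ℂ) :
    expec (WI θ - (2 : ℂ) • Pmat) (tensorVec x y) =
      (∑ k, (x k * star (x k)) *
        ((((2 - Real.sin θ) / 2 + 1 : ℝ) : ℂ) * (y k * star (y k))
        + (((1 + Real.cos θ) / 2 : ℝ) : ℂ) * (y (k + 1) * star (y (k + 1)))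
        + ((2 - (2 - Real.sin θ) / 2 : ℝ) : ℂ) * (y (k + 2) * star (y (k + 2)))
        + ((1 - (1 + Real.cos θ) / 2 : ℝ) : ℂ) * (y (k + 3) * star (y (k + 3)))))
      - (∑ k, x k * y k) * (∑ k, star (x k) * star (y k))
      - (1 / 2) * (x 0 * y 0 - x 1 * y 1 + x 2 * y 2 - x 3 * y 3)
          * (star (x 0) * star (y 0) - star (x 1) * star (y 1)
              + star (x 2) * star (y 2) - star (x 3) * star (y 3)) := by
  unfold WI
  generalize (2 - Real.sin θ) / 2 = a
  generalize (1 + Real.cos θ) / 2 = b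
  generalize hc : 2 - a = c
  generalize hd : 1 - b = d
  have e1 : (1 : Fin 4) + 1 = 2 := rfl
  have e2 : (2 : Fin 4) + 1 = 3 := rfl
  have e3 : (3 : Fin 4) + 1 = 0 := rfl
  have e4 : (1 : Fin 4) + 2 = 3 := rfl
  have e5 : (2 : Fin 4) + 2 = 0 := rfl
  have e6 : (3 : Fin 4) + 2 = 1 := rfl
  have e7 : (1 : Fin 4) + 3 = 0 := rfl
  have e8 : (2 : Fin 4) + 3 = 1 := rfl
  have e9 : (3 : Fin 4) + 3 = 2 := rfl
  have s1 : (0 : Fin 4) - 1 = 3 := rfl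
  have s2 : (0 : Fin 4) - 2 = 2 := rfl
  have s3 : (0 : Fin 4) - 3 = 1 := rfl
  have s4 : (1 : Fin 4) - 2 = 3 := rfl
  have s5 : (1 : Fin 4) - 3 = 2 := rfl
  have s6 : (2 : Fin 4) - 1 = 1 := rfl
  have s7 : (2 : Fin 4) - 3 = 3 := rfl
  have s8 : (3 : Fin 4) - 1 = 2 := rfl
  have s9 : (3 : Fin 4) - 2 = 1 := rfl
  simp only [expec, Matrix.mulVec, dotProduct, Fintype.sum_prod_type, Fin.sum_univ_four,
    Matrix.sub_apply, Matrix.smul_apply, Wabcd, Pmat, PsiVec, tensorVec, smul_eq_mul]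
  simp [s1, s2, s3, s4, s5, s6, s7, s8, s9, e1, e2, e3, e4, e5, e6, e7, e8, e9]
  ring

lemma single_mem (N : Submodule ℂ (Fin 4 × Fin 4 → ℂ))
    (h : ∀ x : Fin 4 → ℂ, (∀ k, x k * star (x k) = 1) → tensorVec x (fun k => star (x k)) ∈ N)
    (k l : Fin 4) (hkl : k ≠ l) : (Pi.single (k, l) 1 : Fin 4 × Fin 4 → ℂ) ∈ N := by
  let X : ℂ → ℂ → Fin 4 → ℂ := fun z w m => if m = k then z else if m = l then w else 1
  have hX : ∀ z w : ℂ, z * star z = 1 → w * star w = 1 →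
      tensorVec (X z w) (fun m => star (X z w m)) ∈ N := by
    intro z w hz hw
    apply h
    intro m
    simp only [X]
    split_ifs <;> simp_all
  have key : (Pi.single (k, l) 1 : Fin 4 × Fin 4 → ℂ) = (1 / 8 : ℂ) •
      ( (tensorVec (X 1 1) (fun m => star (X 1 1 m)) - tensorVec (X 1 (-1)) (fun m => star (X 1 (-1) m)))
      - (tensorVec (X (-1) 1) (fun m => star (X (-1) 1 m)) - tensorVec (X (-1) (-1)) (fun m => star (X (-1) (-1) m)))
      + (-I) • (tensorVec (X I 1) (fun m => star (X I 1 m)) - tensorVec (X I (-1)) (fun m => star (X I (-1) m)))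
      + I • (tensorVec (X (-I) 1) (fun m => star (X (-I) 1 m)) - tensorVec (X (-I) (-1)) (fun m => star (X (-I) (-1) m)))) := by
    ext ⟨m, n⟩
    have hlk : l ≠ k := hkl.symm
    by_cases h1 : m = k <;> by_cases h2 : m = l <;> by_cases h3 : n = k <;> by_cases h4 : n = l <;>
      simp_all [tensorVec, X, Pi.single_apply] <;> (try ring_nf) <;> (try simp) <;> norm_num
  rw [key]
  have i1 : (1 : ℂ) * star 1 = 1 := by simp
  have i2 : (-1 : ℂ) * star (-1) = 1 := by simp
  have i3 : I * star I = 1 := by simp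
  have i4 : -I * star (-I) = 1 := by simp
  refine N.smul_mem _ (N.add_mem (N.add_mem (N.sub_mem ?_ ?_) (N.smul_mem _ ?_)) (N.smul_mem _ ?_))
  all_goals exact N.sub_mem (hX _ _ (by assumption) (by assumption)) (hX _ _ (by assumption) (by assumption))

lemma expec_sub_re (A D : Matrix (Fin 4 × Fin 4) (Fin 4 × Fin 4) ℂ) (ε : ℝ)
    (v : Fin 4 × Fin 4 → ℂ) :
    (expec (A - (ε : ℂ) • D) v).re = (expec A v).re - ε * (expec D v).re := by
  have : expec (A - (ε : ℂ) • D) v = expec A v - (ε : ℂ) * expec D v := by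
    simp only [expec, Matrix.sub_mulVec, Matrix.smul_mulVec, Pi.sub_apply, Pi.smul_apply,
      smul_eq_mul, Finset.mul_sum, ← Finset.sum_sub_distrib]
    exact Finset.sum_congr rfl fun i _ => by ring
  rw [this]
  simp

lemma expec_eq_dot (D : Matrix (Fin 4 × Fin 4) (Fin 4 × Fin 4) ℂ)
    (v : Fin 4 × Fin 4 → ℂ) : expec D v = star v ⬝ᵥ D *ᵥ v := rfl

lemma mem_ker_of_re (D : Matrix (Fin 4 × Fin 4) (Fin 4 × Fin 4) ℂ) (hD : D.PosSemidef)
    (v : Fin 4 × Fin 4 → ℂ) (h : (expec D v).re ≤ 0) : D *ᵥ v = 0 := by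
  rw [← hD.dotProduct_mulVec_zero_iff]
  have h0 := hD.dotProduct_mulVec_nonneg v
  rw [expec_eq_dot] at h
  rw [Complex.le_def] at h0
  apply Complex.ext
  · simp at h0 ⊢; linarith [h0.1]
  · simpa using h0.2.symm

lemma expec_add_ker (D : Matrix (Fin 4 × Fin 4) (Fin 4 × Fin 4) ℂ) (hD : D.PosSemidef)
    (g w : Fin 4 × Fin 4 → ℂ) (hw : D *ᵥ w = 0) : expec D (g + w) = expec D g := by
  rw [expec_eq_dot, expec_eq_dot, Matrix.mulVec_add, hw, add_zero, star_add, add_dotProduct]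
  have : star w ⬝ᵥ D *ᵥ g = 0 := by
    rw [Matrix.dotProduct_mulVec]
    have h2 := Matrix.star_mulVec D w
    rw [hD.isHermitian.eq, hw] at h2
    rw [← h2]; simp
  rw [this, add_zero]

lemma exists_r (θ : ℝ) (hθ : θ ∈ Set.Icc 0 π) (η : ℝ) (hη : 0 < η) :
    ∃ r : ℝ, 0 < r ∧ (1 + Real.cos θ) / 2 * (r⁻¹) ^ 2 + (1 - (1 + Real.cos θ) / 2) * r ^ 2
      ≤ Real.sin θ + 2 * η := by
  obtain ⟨h0, h1⟩ := hθ
  obtain ⟨β, hβ⟩ : ∃ β, β = Real.cos (θ / 2) := ⟨_, rfl⟩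
  obtain ⟨δ, hδ⟩ : ∃ δ, δ = Real.sin (θ / 2) := ⟨_, rfl⟩
  have hβ0 : 0 ≤ β := by
    rw [hβ]; exact Real.cos_nonneg_of_neg_pi_div_two_le_of_le (by linarith) (by linarith)
  have hδ0 : 0 ≤ δ := by
    rw [hδ]; exact Real.sin_nonneg_of_nonneg_of_le_pi (by linarith) (by linarith)
  have hsq : δ ^ 2 + β ^ 2 = 1 := by rw [hβ, hδ]; exact Real.sin_sq_add_cos_sq _
  have hS : Real.sin θ = 2 * δ * β := by
    rw [hβ, hδ, ← Real.sin_two_mul]; congr 1; ring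
  have hC : Real.cos θ = 2 * β ^ 2 - 1 := by
    rw [hβ, ← Real.cos_two_mul]; congr 1; ring
  have p1 : 0 < β + η := by linarith
  have p2 : 0 < δ + η := by linarith
  refine ⟨Real.sqrt ((β + η) / (δ + η)), Real.sqrt_pos.2 (div_pos p1 p2), ?_⟩
  rw [inv_pow, Real.sq_sqrt (div_pos p1 p2).le, inv_div, hS, hC]
  have q1 : β ^ 2 * ((δ + η) / (β + η)) ≤ β * (δ + η) := by
    rw [← mul_div_assoc, div_le_iff₀ p1]
    nlinarith [mul_nonneg (mul_nonneg hβ0 p2.le) hη.le]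
  have q2 : δ ^ 2 * ((β + η) / (δ + η)) ≤ δ * (β + η) := by
    rw [← mul_div_assoc, div_le_iff₀ p2]
    nlinarith [mul_nonneg (mul_nonneg hδ0 p1.le) hη.le]
  have b1 : β ≤ 1 := by nlinarith
  have d1 : δ ≤ 1 := by nlinarith
  have e1 : (1 + (2 * β ^ 2 - 1)) / 2 = β ^ 2 := by ring
  have e2 : 1 - β ^ 2 = δ ^ 2 := by linarith
  rw [e1, e2]
  nlinarith

lemma pair_ker (θ : ℝ) (hθ : θ ∈ Set.Icc 0 π)
    (D : Matrix (Fin 4 × Fin 4) (Fin 4 × Fin 4) ℂ) (hD : D.PosSemidef)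
    (ε : ℝ) (hε : 0 < ε) (X Y : ℝ → Fin 4 → ℂ) (g : Fin 4 × Fin 4 → ℂ)
    (hall : ∀ x y : Fin 4 → ℂ,
      ε * (expec D (tensorVec x y)).re ≤ (expec (WI θ - (2 : ℂ) • Pmat) (tensorVec x y)).re)
    (hg : ∀ r : ℝ, 0 < r → D *ᵥ (tensorVec (X r) (Y r) - g) = 0)
    (hf : ∀ r : ℝ, 0 < r → expec (WI θ - (2 : ℂ) • Pmat) (tensorVec (X r) (Y r)) =
      (((1 + Real.cos θ) / 2 * (r⁻¹) ^ 2 + (1 - (1 + Real.cos θ) / 2) * r ^ 2 - Real.sin θ : ℝ) : ℂ)) :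
    D *ᵥ g = 0 := by
  apply mem_ker_of_re D hD
  by_contra! hpos
  obtain ⟨r, hr, hle⟩ := exists_r θ hθ (ε * (expec D g).re / 4) (by positivity)
  have h1 := hall (X r) (Y r)
  have h2 := expec_add_ker D hD g _ (hg r hr)
  rw [add_sub_cancel] at h2
  rw [h2, hf r hr, Complex.ofReal_re] at h1
  nlinarith [mul_pos hε hpos]

theorem WI_optimized_is_optimal (θ : ℝ) (hθ : θ ∈ Set.Icc 0 π)
    (D : Matrix (Fin 4 × Fin 4) (Fin 4 × Fin 4) ℂ) (hD : D.PosSemidef) (hD0 : D ≠ 0)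
    (ε : ℝ) (hε : 0 < ε) :
    ∃ x y : Fin 4 → ℂ,
      (expec (WI θ - (2 : ℂ) • Pmat - (ε : ℂ) • D) (tensorVec x y)).re < 0 := by
  by_contra! hcon
  have hall : ∀ x y : Fin 4 → ℂ,
      ε * (expec D (tensorVec x y)).re ≤
        (expec (WI θ - (2 : ℂ) • Pmat) (tensorVec x y)).re := by
    intro x y
    have := hcon x y
    rw [expec_sub_re] at this
    linarith
  have hzero : ∀ x y : Fin 4 → ℂ,
      expec (WI θ - (2 : ℂ) • Pmat) (tensorVec x y) = 0 → D *ᵥ (tensorVec x y) = 0 := by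
    intro x y h
    apply mem_ker_of_re D hD
    have := hall x y
    rw [h, Complex.zero_re] at this
    by_contra! hp
    linarith [mul_pos hε hp]
  have hoff : ∀ k l : Fin 4, k ≠ l → D *ᵥ (Pi.single (k, l) 1) = 0 := by
    intro k l hkl
    have := single_mem (LinearMap.ker D.mulVecLin) (fun x hx => by
      rw [LinearMap.mem_ker, Matrix.mulVecLin_apply]
      apply hzero
      have hx' : ∀ k, star (x k) * x k = 1 := fun k => by rw [mul_comm]; exact hx k
      rw [expec_formula]
      simp only [Fin.sum_univ_four, star_star, hx, hx']
      push_cast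
      ring) k l hkl
    rwa [LinearMap.mem_ker, Matrix.mulVecLin_apply] at this
  have e1 : (1 : Fin 4) + 1 = 2 := rfl
  have e2 : (2 : Fin 4) + 1 = 3 := rfl
  have e3 : (3 : Fin 4) + 1 = 0 := rfl
  have e4 : (1 : Fin 4) + 2 = 3 := rfl
  have e5 : (2 : Fin 4) + 2 = 0 := rfl
  have e6 : (3 : Fin 4) + 2 = 1 := rfl
  have e7 : (1 : Fin 4) + 3 = 0 := rfl
  have e8 : (2 : Fin 4) + 3 = 1 := rfl
  have e9 : (3 : Fin 4) + 3 = 2 := rfl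
  -- the two alternating zeros
  have h02 : D *ᵥ (Pi.single (0, 0) 1) + D *ᵥ (Pi.single (2, 2) 1) = 0 := by
    have h := hzero ![1, 0, 1, 0] ![1, 0, 1, 0] (by
      rw [expec_formula]
      simp [Fin.sum_univ_four, e1, e2, e3, e4, e5, e6, e7, e8, e9]
      ring)
    have hv : tensorVec ![1, 0, 1, 0] ![1, 0, 1, 0] = Pi.single (0, 0) 1 + Pi.single (2, 2) 1
        + Pi.single (0, 2) 1 + Pi.single (2, 0) 1 := by
      ext ⟨m, n⟩
      fin_cases m <;> fin_cases n <;> simp [tensorVec, Pi.single_apply]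
    rw [hv] at h
    simpa only [Matrix.mulVec_add, hoff 0 2 (by decide), hoff 2 0 (by decide), add_zero] using h
  have h13 : D *ᵥ (Pi.single (1, 1) 1) + D *ᵥ (Pi.single (3, 3) 1) = 0 := by
    have h := hzero ![0, 1, 0, 1] ![0, 1, 0, 1] (by
      rw [expec_formula]
      simp [Fin.sum_univ_four, e1, e2, e3, e4, e5, e6, e7, e8, e9]
      ring)
    have hv : tensorVec ![0, 1, 0, 1] ![0, 1, 0, 1] = Pi.single (1, 1) 1 + Pi.single (3, 3) 1
        + Pi.single (1, 3) 1 + Pi.single (3, 1) 1 := by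
      ext ⟨m, n⟩
      fin_cases m <;> fin_cases n <;> simp [tensorVec, Pi.single_apply]
    rw [hv] at h
    simpa only [Matrix.mulVec_add, hoff 1 3 (by decide), hoff 3 1 (by decide), add_zero] using h
  -- the neighbouring pairs
  have h01 : D *ᵥ (Pi.single (0, 0) 1) + D *ᵥ (Pi.single (1, 1) 1) = 0 := by
    rw [← Matrix.mulVec_add]
    refine pair_ker θ hθ D hD ε hε (fun r => ![1, (r : ℂ), 0, 0]) (fun r => ![1, (r : ℂ)⁻¹, 0, 0])
      _ hall ?_ ?_
    · intro r hr
      have hr' : (r : ℂ) ≠ 0 := by exact_mod_cast hr.ne'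
      have hv : tensorVec ![1, (r : ℂ), 0, 0] ![1, (r : ℂ)⁻¹, 0, 0]
          - (Pi.single (0, 0) 1 + Pi.single (1, 1) 1)
          = (r : ℂ)⁻¹ • Pi.single (0, 1) 1 + (r : ℂ) • Pi.single (1, 0) 1 := by
        ext ⟨m, n⟩
        fin_cases m <;> fin_cases n <;> simp [tensorVec, Pi.single_apply, hr']
      rw [hv, Matrix.mulVec_add, Matrix.mulVec_smul, Matrix.mulVec_smul, hoff 0 1 (by decide),
        hoff 1 0 (by decide)]
      simp
    · intro r hr
      have hr' : (r : ℂ) ≠ 0 := by exact_mod_cast hr.ne'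
      rw [expec_formula]
      simp [Fin.sum_univ_four, e1, e2, e3, e4, e5, e6, e7, e8, e9, hr']
      field_simp
      ring
  have h12 : D *ᵥ (Pi.single (1, 1) 1) + D *ᵥ (Pi.single (2, 2) 1) = 0 := by
    rw [← Matrix.mulVec_add]
    refine pair_ker θ hθ D hD ε hε (fun r => ![0, 1, (r : ℂ), 0]) (fun r => ![0, 1, (r : ℂ)⁻¹, 0])
      _ hall ?_ ?_
    · intro r hr
      have hr' : (r : ℂ) ≠ 0 := by exact_mod_cast hr.ne'
      have hv : tensorVec ![0, 1, (r : ℂ), 0] ![0, 1, (r : ℂ)⁻¹, 0]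
          - (Pi.single (1, 1) 1 + Pi.single (2, 2) 1)
          = (r : ℂ)⁻¹ • Pi.single (1, 2) 1 + (r : ℂ) • Pi.single (2, 1) 1 := by
        ext ⟨m, n⟩
        fin_cases m <;> fin_cases n <;> simp [tensorVec, Pi.single_apply, hr']
      rw [hv, Matrix.mulVec_add, Matrix.mulVec_smul, Matrix.mulVec_smul, hoff 1 2 (by decide),
        hoff 2 1 (by decide)]
      simp
    · intro r hr
      have hr' : (r : ℂ) ≠ 0 := by exact_mod_cast hr.ne'
      rw [expec_formula]
      simp [Fin.sum_univ_four, e1, e2, e3, e4, e5, e6, e7, e8, e9, hr']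
      field_simp
      ring
  have hdiag : ∀ k : Fin 4, D *ᵥ (Pi.single (k, k) 1) = 0 := by
    have d0 : D *ᵥ (Pi.single (0, 0) 1) = 0 := by
      ext i
      have a1 := congrFun h01 i
      have a2 := congrFun h12 i
      have a3 := congrFun h02 i
      simp only [Pi.add_apply, Pi.zero_apply] at a1 a2 a3 ⊢
      linear_combination (a1 + a3 - a2) / 2
    have d1 := h01
    rw [d0, zero_add] at d1
    have d2 := h02
    rw [d0, zero_add] at d2
    have d3 := h13
    rw [d1, zero_add] at d3
    intro k
    fin_cases k <;> assumption
  apply hD0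
  ext i j
  have hj : D *ᵥ (Pi.single j 1) = 0 := by
    obtain ⟨k, l⟩ := j
    by_cases hkl : k = l
    · subst hkl; exact hdiag k
    · exact hoff k l hkl
  have := congrFun hj i
  simpa using this
end

section
/- Let θ ∈ (0,π). The witness W_II(θ) is optimal: for every positive semidefinite 16×16 matrix D with D ≠ 0 and every λ > 0, the matrix W_II(θ) − λ·D is not block positive (i.e. there exist x,y : Fin 4 → ℂ with Re⟨x⊗y, (W_II(θ) − λD)(x⊗y)⟩ < 0). -/
open Matrix Complex Real

open scoped ComplexOrder


theorem shift4 :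
    ((0 : Fin 4) + 1 = 1) ∧ ((0 : Fin 4) + 2 = 2) ∧ ((0 : Fin 4) + 3 = 3) ∧
    ((1 : Fin 4) + 1 = 2) ∧ ((1 : Fin 4) + 2 = 3) ∧ ((1 : Fin 4) + 3 = 0) ∧
    ((2 : Fin 4) + 1 = 3) ∧ ((2 : Fin 4) + 2 = 0) ∧ ((2 : Fin 4) + 3 = 1) ∧
    ((3 : Fin 4) + 1 = 0) ∧ ((3 : Fin 4) + 2 = 1) ∧ ((3 : Fin 4) + 3 = 2) ∧
    ((0 : Fin 4) - 1 = 3) ∧ ((0 : Fin 4) - 2 = 2) ∧ ((0 : Fin 4) - 3 = 1) ∧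
    ((1 : Fin 4) - 1 = 0) ∧ ((1 : Fin 4) - 2 = 3) ∧ ((1 : Fin 4) - 3 = 2) ∧
    ((2 : Fin 4) - 1 = 1) ∧ ((2 : Fin 4) - 2 = 0) ∧ ((2 : Fin 4) - 3 = 3) ∧
    ((3 : Fin 4) - 1 = 2) ∧ ((3 : Fin 4) - 2 = 1) ∧ ((3 : Fin 4) - 3 = 0) := by
  decide

theorem expec_W (a b c d : ℝ) (x y : Fin 4 → ℂ) :
    expec (Wabcd a b c d) (tensorVec x y) =
      (∑ k, star (x k) * x k * ((a + 1) * (star (y k) * y k) + b * (star (y (k + 1)) * y (k + 1))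
        + c * (star (y (k + 2)) * y (k + 2)) + d * (star (y (k + 3)) * y (k + 3))))
      - star (∑ k, x k * y k) * (∑ k, x k * y k) := by
  have h1 : ∀ p, (Wabcd a b c d).mulVec (tensorVec x y) p =
      ((![a, b, c, d] (p.2 - p.1) : ℝ) : ℂ) * (x p.1 * y p.2) +
      (if p.1 = p.2 then x p.1 * y p.2 - ∑ k, x k * y k else 0) := by
    rintro ⟨k, m⟩
    fin_cases k <;> fin_cases m <;>
      simp [Matrix.mulVec, dotProduct, Fintype.sum_prod_type, Fin.sum_univ_four, Wabcd,
        tensorVec] <;> ring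
  unfold expec
  simp only [h1]
  simp [Fintype.sum_prod_type, Fin.sum_univ_four, tensorVec, shift4]
  ring

/-- phase vectors -/
noncomputable def ph (k m : Fin 4) (z w : ℂ) : Fin 4 → ℂ :=
  fun j => if j = k then z else if j = m then w else 1

theorem off_diag (k m : Fin 4) (h : k ≠ m) :
    (Pi.single (k, m) 1 : Fin 4 × Fin 4 → ℂ) =
     (1 / 8 : ℂ) • (
      (tensorVec (ph k m 1 1) (star (ph k m 1 1)) - tensorVec (ph k m 1 (-1)) (star (ph k m 1 (-1))))
      - (tensorVec (ph k m (-1) 1) (star (ph k m (-1) 1))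
        - tensorVec (ph k m (-1) (-1)) (star (ph k m (-1) (-1))))
      + (-I) • (tensorVec (ph k m I 1) (star (ph k m I 1))
        - tensorVec (ph k m I (-1)) (star (ph k m I (-1))))
      + I • (tensorVec (ph k m (-I) 1) (star (ph k m (-I) 1))
        - tensorVec (ph k m (-I) (-1)) (star (ph k m (-I) (-1))))) := by
  funext ⟨j, l⟩
  have h' := h.symm
  by_cases h1 : j = k <;> by_cases h2 : l = k <;> by_cases h3 : j = m <;> by_cases h4 : l = m <;>
    simp_all [tensorVec, ph, Pi.single_apply] <;> ring_nf <;> simp <;> ring_nf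

theorem expec_ph (θ : ℝ) (x : Fin 4 → ℂ) (hx : ∀ k, star (x k) * x k = 1) :
    expec (WII θ) (tensorVec x (star x)) = 0 := by
  unfold WII
  rw [expec_W]
  have hx' : ∀ k, x k * star (x k) = 1 := fun k => by rw [mul_comm]; exact hx k
  simp only [Pi.star_apply, star_star, hx, hx']
  simp
  ring

theorem WII_is_optimal (θ : ℝ) (hθ : θ ∈ Set.Ioo 0 π)
    (D : Matrix (Fin 4 × Fin 4) (Fin 4 × Fin 4) ℂ) (hD : D.PosSemidef) (hD0 : D ≠ 0)
    (lam : ℝ) (hlam : 0 < lam) :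
    ∃ x y : Fin 4 → ℂ,
      (expec (WII θ - (lam : ℂ) • D) (tensorVec x y)).re < 0 := by
  by_contra hcon
  push Not at hcon
  have hE : ∀ x y, lam * (expec D (tensorVec x y)).re ≤ (expec (WII θ) (tensorVec x y)).re := by
    intro x y
    have h := hcon x y
    have h2 : expec (WII θ - (lam : ℂ) • D) (tensorVec x y) =
        expec (WII θ) (tensorVec x y) - lam * expec D (tensorVec x y) := by
      simp only [expec, Matrix.sub_mulVec, Matrix.smul_mulVec, Finset.mul_sum,
        ← Finset.sum_sub_distrib]
      refine Finset.sum_congr rfl fun i _ => ?_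
      simp only [Pi.sub_apply, Pi.smul_apply, smul_eq_mul]
      ring
    rw [h2] at h
    simp at h
    linarith
  have hexp : ∀ v, expec D v = star v ⬝ᵥ D *ᵥ v := fun v => rfl
  have hpos : ∀ v, 0 ≤ expec D v := fun v => by rw [hexp]; exact hD.dotProduct_mulVec_nonneg v
  have hker : ∀ v, (expec D v).re ≤ 0 → D *ᵥ v = 0 := by
    intro v hv
    rw [← hD.dotProduct_mulVec_zero_iff, ← hexp]
    have := Complex.le_def.1 (hpos v)
    apply Complex.ext
    · exact le_antisymm hv this.1
    · exact this.2.symm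
  have hz : ∀ x y, expec (WII θ) (tensorVec x y) = 0 → D *ᵥ tensorVec x y = 0 := by
    intro x y h
    apply hker
    have := hE x y
    rw [h, Complex.zero_re] at this
    by_contra hc
    push Not at hc
    nlinarith [mul_pos hlam hc]
  have hph : ∀ k m z w, star z * z = 1 → star w * w = 1 →
      D *ᵥ tensorVec (ph k m z w) (star (ph k m z w)) = 0 := by
    intro k m z w h1 h2
    apply hz
    apply expec_ph
    intro j
    unfold ph
    split_ifs
    · exact h1
    · exact h2
    · simp
  have hoff : ∀ k m, k ≠ m → D *ᵥ Pi.single (k, m) 1 = 0 := by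
    intro k m h
    rw [off_diag k m h]
    simp only [Matrix.mulVec_smul, Matrix.mulVec_add, Matrix.mulVec_sub]
    rw [hph, hph, hph, hph, hph, hph, hph, hph] <;> simp
  -- a vector is acted on only through its diagonal
  have hdiag : ∀ v : Fin 4 × Fin 4 → ℂ,
      D *ᵥ v = ∑ k, v (k, k) • D *ᵥ Pi.single (k, k) 1 := by
    intro v
    have hv : v = ∑ p, v p • (Pi.single p 1 : Fin 4 × Fin 4 → ℂ) := by
      funext q
      simp [Finset.sum_apply, Pi.single_apply]
    conv_lhs => rw [hv]
    rw [Matrix.mulVec_sum, Fintype.sum_prod_type]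
    refine Finset.sum_congr rfl fun k _ => ?_
    rw [Finset.sum_eq_single k]
    · rw [Matrix.mulVec_smul]
    · intro m _ hm
      rw [Matrix.mulVec_smul, hoff k m hm.symm, smul_zero]
    · simp
  have hpair : ∀ k : Fin 4, D *ᵥ Pi.single (k, k) 1 + D *ᵥ Pi.single (k + 2, k + 2) 1 = 0 := by
    intro k
    have h := hz (fun j => if j = k ∨ j = k + 2 then 1 else 0)
      (fun j => if j = k ∨ j = k + 2 then 1 else 0) (by
        unfold WII
        rw [expec_W]
        fin_cases k <;> simp [Fin.sum_univ_four] <;> ring)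
    rw [hdiag] at h
    fin_cases k <;> simpa [Fin.sum_univ_four, tensorVec, add_comm] using h
  have hS : 0 < Real.sin θ := Real.sin_pos_of_mem_Ioo hθ
  have hSC := Real.sin_sq_add_cos_sq θ
  have hC : 0 < 1 - Real.cos θ := by nlinarith [Real.cos_le_one θ]
  obtain ⟨κ, hκ⟩ : ∃ κ : ℝ, 4 * (1 - Real.cos θ) * κ = Real.sin θ :=
    ⟨Real.sin θ / (4 * (1 - Real.cos θ)), by field_simp⟩
  have hdd : ∀ k, D *ᵥ Pi.single (k, k) 1 = 0 := by
    suffices hs : ∀ k : Fin 4, D *ᵥ Pi.single (k + 1, k + 1) 1 = 0 by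
      intro k
      simpa using hs (k - 1)
    intro k
    apply hker
    by_contra hc
    push Not at hc
    set g := (expec D (Pi.single (k + 1, k + 1) 1)).re with hg
    have hlg : 0 < lam * g := mul_pos hlam hc
    obtain ⟨ε, hε, hεg⟩ : ∃ ε : ℝ, 0 < ε ∧ 8 * κ ^ 2 * ε ^ 2 < lam * g := by
      have hk : 0 < 8 * κ ^ 2 + 1 := by positivity
      refine ⟨√(lam * g / (8 * κ ^ 2 + 1)), by positivity, ?_⟩
      rw [Real.sq_sqrt (by positivity), mul_div_assoc', div_lt_iff₀ hk]
      nlinarith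
    set δ : ℝ := κ * ε ^ 2 with hδ
    set x : Fin 4 → ℂ := fun j => ((![1 + δ, ε, 1 - δ, 0] (j - k) : ℝ) : ℂ) with hx
    set y : Fin 4 → ℂ := fun j => ((![1 - δ, ε, 1 + δ, 0] (j - k) : ℝ) : ℂ) with hy
    have hW : expec (WII θ) (tensorVec x y) = ((8 * κ ^ 2 * ε ^ 6 : ℝ) : ℂ) := by
      have hreal : (16 * ((1 - Real.cos θ) / 2) * δ ^ 2 - 4 * Real.sin θ * δ * ε ^ 2
          + (1 + Real.cos θ) / 2 * ε ^ 4 + 8 * δ ^ 2 * ε ^ 2 : ℝ) = 8 * κ ^ 2 * ε ^ 6 := by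
        have : 8 * (1 - Real.cos θ) * κ ^ 2 - 4 * Real.sin θ * κ + (1 + Real.cos θ) / 2 = 0 := by
          have h2 : (1 - Real.cos θ) *
              (8 * (1 - Real.cos θ) * κ ^ 2 - 4 * Real.sin θ * κ + (1 + Real.cos θ) / 2) = 0 := by
            rw [← hκ] at hSC ⊢
            linear_combination (-1 / 2) * hSC
          exact (mul_eq_zero.1 h2).resolve_left hC.ne'
        rw [hδ]
        linear_combination ε ^ 4 * this
      rw [← hreal]
      unfold WII
      rw [expec_W]
      simp only [hx, hy, Complex.star_def, map_sum, map_mul, Complex.conj_ofReal]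
      norm_cast
      fin_cases k <;> simp [Fin.sum_univ_four, shift4] <;> ring
    have hDv : D *ᵥ tensorVec x y = (ε ^ 2 : ℂ) • D *ᵥ Pi.single (k + 1, k + 1) 1 := by
      have hp := hpair k
      rw [add_eq_zero_iff_eq_neg] at hp
      rw [hdiag]
      have hsum : ∀ f : Fin 4 → (Fin 4 × Fin 4 → ℂ),
          ∑ j, f j = f k + f (k + 1) + f (k + 2) + f (k + 3) := by
        intro f
        fin_cases k <;> simp [Fin.sum_univ_four, shift4] <;> abel
      rw [hsum, hp]
      simp only [tensorVec, hx, hy, sub_self, add_sub_cancel_left]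
      simp
      module
    have hDe : expec D (tensorVec x y) =
        (ε ^ 4 : ℂ) * expec D (Pi.single (k + 1, k + 1) 1) := by
      rw [hexp, hexp, hDv, dotProduct_smul, Matrix.dotProduct_mulVec, Matrix.dotProduct_mulVec]
      have hv : ∀ v, star v ᵥ* D = star (D *ᵥ v) := by
        intro v
        rw [Matrix.star_mulVec, hD.isHermitian.eq]
      rw [hv, hDv, hv, star_smul, smul_dotProduct]
      simp
      ring
    have h := hE x y
    rw [hW, hDe] at h
    have h3 : ((ε ^ 4 : ℂ) * expec D (Pi.single (k + 1, k + 1) 1)).re = ε ^ 4 * g := by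
      rw [hg, ← Complex.ofReal_pow, Complex.re_ofReal_mul]
    rw [h3, Complex.ofReal_re] at h
    have h4 : 0 < ε ^ 4 := by positivity
    nlinarith [mul_lt_mul_of_pos_left hεg h4]
  apply hD0
  have h0 : ∀ p, D *ᵥ Pi.single p 1 = 0 := by
    rintro ⟨k, m⟩
    by_cases h : k = m
    · subst h; exact hdd k
    · exact hoff k m h
  ext i j
  have := congrFun (h0 j) i
  simpa using this
end
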